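/- Fix ρ with 0 < |ρ| < 1 and c > 0, and let W, Z be independent standard normal. Define T'(γ) as above. For 1/2 ≤ v < 1 and q = Φ^{-1}(1−v), there exists γ ∈ ℝ such that Pr(T'(γ) ≤ q) > Φ(q), i.e., the (1−v)-quantile of T'(γ) is strictly smaller than Φ^{-1}(1−v) for some γ. -/

import Mathlib

open MeasureTheory ProbabilityTheory Set

noncomputable def stdPhi (u : ℝ) : ℝ := (Real.sqrt (2 * Real.pi))⁻¹ * Real.exp (-(u ^ 2) / 2)

noncomputable def stdCdf (x : ℝ) : ℝ := ∫ u in Iic x, stdPhi u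

noncomputable def Tstat (ρ c γ : ℝ) (p : ℝ × ℝ) : ℝ :=
  if c < |p.2 + γ| then Real.sqrt (1 - ρ ^ 2) * p.1 + ρ * p.2
  else p.1 - ρ * γ / Real.sqrt (1 - ρ ^ 2)

noncomputable def stdNormal2 : Measure (ℝ × ℝ) :=
  (gaussianReal 0 1).prod (gaussianReal 0 1)

lemma stdPhi_eq : stdPhi = gaussianPDFReal 0 1 := by
  funext u
  simp [stdPhi, gaussianPDFReal]

lemma stdPhi_pos (u : ℝ) : 0 < stdPhi u := by
  unfold stdPhi; positivity

lemma stdPhi_cont : Continuous stdPhi := by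
  unfold stdPhi; fun_prop

lemma stdPhi_integrable : Integrable stdPhi := by
  rw [stdPhi_eq]; exact integrable_gaussianPDFReal 0 1

lemma stdPhi_neg (u : ℝ) : stdPhi (-u) = stdPhi u := by
  simp [stdPhi]

lemma stdPhi_anti {a b : ℝ} (ha : 0 ≤ a) (hab : a ≤ b) : stdPhi b ≤ stdPhi a := by
  unfold stdPhi
  gcongr

lemma stdPhi_shift (u γ : ℝ) :
    stdPhi (u - γ) = stdPhi u * Real.exp (γ * u) * Real.exp (-(γ ^ 2) / 2) := by
  unfold stdPhi
  rw [mul_assoc, mul_assoc, ← Real.exp_add, ← Real.exp_add]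
  congr 2
  ring

lemma stdCdf_sub (a b : ℝ) : stdCdf b - stdCdf a = ∫ u in a..b, stdPhi u := by
  unfold stdCdf
  exact intervalIntegral.integral_Iic_sub_Iic stdPhi_integrable.integrableOn
    stdPhi_integrable.integrableOn

lemma stdCdf_strictMono : StrictMono stdCdf := by
  intro a b hab
  have h : 0 < ∫ u in a..b, stdPhi u :=
    intervalIntegral.intervalIntegral_pos_of_pos (stdPhi_cont.intervalIntegrable _ _) stdPhi_pos hab
  have := stdCdf_sub a b
  linarith

lemma stdCdf_tangent {m x : ℝ} (hm : 0 ≤ m) (hx : 0 ≤ x) :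
    stdCdf x ≤ stdCdf m + stdPhi m * (x - m) := by
  rcases le_total m x with h | h
  · have h1 := stdCdf_sub m x
    have h2 : ∫ u in m..x, stdPhi u ≤ ∫ u in m..x, stdPhi m :=
      intervalIntegral.integral_mono_on h (stdPhi_cont.intervalIntegrable _ _)
        (by simp) (fun u hu => stdPhi_anti hm hu.1)
    simp only [intervalIntegral.integral_const, smul_eq_mul] at h2
    nlinarith
  · have h1 := stdCdf_sub x m
    have h2 : ∫ u in x..m, stdPhi m ≤ ∫ u in x..m, stdPhi u :=
      intervalIntegral.integral_mono_on h (by simp) (stdPhi_cont.intervalIntegrable _ _)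
        (fun u hu => stdPhi_anti (hx.trans hu.1) hu.2)
    simp only [intervalIntegral.integral_const, smul_eq_mul] at h2
    nlinarith

lemma gauss_real_eq (x : ℝ) : (gaussianReal 0 1).real (Iic x) = stdCdf x := by
  rw [measureReal_def, gaussianReal_apply_eq_integral 0 one_ne_zero, ENNReal.toReal_ofReal]
  · rw [stdCdf, stdPhi_eq]
  · exact integral_nonneg fun u => gaussianPDFReal_nonneg 0 1 u

lemma stdCdf_zero : stdCdf 0 = 1 / 2 := by
  have h1 : ∫ u in Iic (0:ℝ), stdPhi u = ∫ u in Ioi (0:ℝ), stdPhi u := by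
    have := integral_comp_neg_Iic (0:ℝ) stdPhi
    simpa [stdPhi_neg] using this
  have h2 : (∫ u in Iic (0:ℝ), stdPhi u) + ∫ u in Ioi (0:ℝ), stdPhi u = 1 := by
    rw [intervalIntegral.integral_Iic_add_Ioi stdPhi_integrable.integrableOn
      stdPhi_integrable.integrableOn, stdPhi_eq]
    exact integral_gaussianPDFReal_eq_one 0 one_ne_zero
  unfold stdCdf
  linarith

lemma tilt_pos {ρ c γ : ℝ} (hc : 0 < c) (h : 0 < ρ * γ) :
    0 < ∫ u in (-c)..c, (ρ * u) * stdPhi (u - γ) := by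
  have hodd : ∫ u in (-c)..c, (ρ * u) * (stdPhi u * Real.exp (-(γ ^ 2) / 2)) = 0 := by
    have := intervalIntegral.integral_comp_neg (a := -c) (b := c)
      (fun u => (ρ * u) * (stdPhi u * Real.exp (-(γ ^ 2) / 2)))
    simp only [stdPhi_neg, neg_neg, mul_neg, neg_mul, intervalIntegral.integral_neg] at this
    linarith
  have key : ∀ u : ℝ, u ≠ 0 → (ρ * u) * (stdPhi u * Real.exp (-(γ ^ 2) / 2))
      < (ρ * u) * stdPhi (u - γ) := by
    intro u hu
    rw [stdPhi_shift]
    have hp : 0 < stdPhi u * Real.exp (-(γ ^ 2) / 2) := mul_pos (stdPhi_pos u) (Real.exp_pos _)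
    have : 0 < (ρ * u) * (Real.exp (γ * u) - 1) := by
      have h2 : 0 < (ρ * u) * (γ * u) := by
        have : 0 < u ^ 2 := by positivity
        nlinarith
      rcases pos_and_pos_or_neg_and_neg_of_mul_pos h2 with ⟨h3, h4⟩ | ⟨h3, h4⟩
      · have := Real.one_lt_exp_iff.2 h4
        exact mul_pos h3 (by linarith)
      · have : Real.exp (γ * u) < 1 := by rw [← Real.exp_zero]; exact Real.exp_lt_exp.2 h4
        exact mul_pos_of_neg_of_neg h3 (by linarith)
    nlinarith [mul_pos this hp]
  rw [← hodd]
  have hC := stdPhi_cont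
  refine intervalIntegral.integral_lt_integral_of_continuousOn_of_le_of_exists_lt (by linarith)
    (by fun_prop) (by fun_prop) ?_ ⟨c, ⟨by linarith, le_rfl⟩, key c hc.ne'⟩
  intro u _
  rcases eq_or_ne u 0 with rfl | hu
  · simp
  · exact (key u hu).le

lemma sum_law {ρ s q : ℝ} (h : s ^ 2 + ρ ^ 2 = 1) :
    stdNormal2.real {p | s * p.1 + ρ * p.2 ≤ q} = stdCdf q := by
  have hmap : Measure.map (fun p : ℝ × ℝ => s * p.1 + ρ * p.2) stdNormal2 = gaussianReal 0 1 := by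
    have h1 : Measure.map (fun x : ℝ => s * x) (gaussianReal 0 1)
        = gaussianReal 0 (⟨s ^ 2, sq_nonneg s⟩) := by
      rw [gaussianReal_map_const_mul]; simp; rfl
    have h2 : Measure.map (fun x : ℝ => ρ * x) (gaussianReal 0 1)
        = gaussianReal 0 (⟨ρ ^ 2, sq_nonneg ρ⟩) := by
      rw [gaussianReal_map_const_mul]; simp; rfl
    have h3 := gaussianReal_conv_gaussianReal (m₁ := 0) (m₂ := 0)
      (v₁ := ⟨s ^ 2, sq_nonneg s⟩) (v₂ := ⟨ρ ^ 2, sq_nonneg ρ⟩)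
    rw [← h1, ← h2, Measure.conv, Measure.map_prod_map _ _ (by fun_prop) (by fun_prop),
      Measure.map_map (by fun_prop) (by fun_prop)] at h3
    unfold stdNormal2
    convert h3 using 2
    · rfl
    · exact (add_zero (0:ℝ)).symm
    · exact NNReal.eq h.symm
  rw [← gauss_real_eq, ← hmap, map_measureReal_apply (by fun_prop) measurableSet_Iic]
  rfl

lemma real_eq_integral {S : Set (ℝ × ℝ)} (hS : MeasurableSet S) {F : ℝ → ℝ}
    (hF : ∀ z, {w | (w, z) ∈ S} = Iic (F z)) :
    Integrable (fun z => stdCdf (F z)) (gaussianReal 0 1) ∧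
    stdNormal2.real S = ∫ z, stdCdf (F z) ∂(gaussianReal 0 1) := by
  have hm : Measurable (fun z => (gaussianReal 0 1) ((fun w => (w, z)) ⁻¹' S)) :=
    measurable_measure_prodMk_right hS
  have he : ∀ z, stdCdf (F z) = ((gaussianReal 0 1) ((fun w => (w, z)) ⁻¹' S)).toReal := by
    intro z
    rw [← gauss_real_eq, measureReal_def, ← hF z]
    rfl
  simp_rw [he]
  constructor
  · refine Integrable.of_bound (C := 1) hm.ennreal_toReal.aestronglyMeasurable ?_
    filter_upwards with z
    rw [Real.norm_eq_abs, abs_of_nonneg ENNReal.toReal_nonneg]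
    exact ENNReal.toReal_le_of_le_ofReal zero_le_one (by simpa using prob_le_one)
  · rw [integral_toReal hm.aemeasurable (by filter_upwards with z; exact measure_lt_top _ _),
      measureReal_def, stdNormal2, Measure.prod_apply_symm hS]

theorem stmt_10 (ρ c : ℝ) (hρ0 : ρ ≠ 0) (hρ1 : |ρ| < 1) (hc : 0 < c)
    (v q : ℝ) (hv0 : 1 / 2 ≤ v) (hv1 : v < 1) (hq : stdCdf q = 1 - v) :
    ∃ γ : ℝ, ENNReal.ofReal (stdCdf q) < stdNormal2 {p | Tstat ρ c γ p ≤ q} := by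
  have hq0 : q ≤ 0 := by
    by_contra! h
    have := stdCdf_strictMono h
    rw [stdCdf_zero] at this
    linarith
  have hρ2 : ρ ^ 2 < 1 := (sq_lt_one_iff_abs_lt_one ρ).2 hρ1
  set s := Real.sqrt (1 - ρ ^ 2) with hs
  have hs0 : 0 < s := Real.sqrt_pos.2 (by linarith)
  have hs2 : s ^ 2 = 1 - ρ ^ 2 := Real.sq_sqrt (by linarith)
  have hs1 : s ≤ 1 := by have : 0 < ρ ^ 2 := by positivity
                         nlinarith
  have habs : 0 < |ρ| := abs_pos.2 hρ0
  set γ := (|ρ| * c - q) / ρ with hγ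
  have hργ : ρ * γ = |ρ| * c - q := by rw [hγ]; field_simp
  have hργ0 : 0 < ρ * γ := by rw [hργ]; have := mul_pos habs hc; linarith
  refine ⟨γ, ?_⟩
  haveI : IsProbabilityMeasure stdNormal2 := by unfold stdNormal2; infer_instance
  have hSm : MeasurableSet {p | Tstat ρ c γ p ≤ q} := by
    refine measurableSet_le ?_ measurable_const
    unfold Tstat
    exact Measurable.ite (measurableSet_lt measurable_const (by fun_prop)) (by fun_prop)
      (by fun_prop)
  have hUm : MeasurableSet {p : ℝ × ℝ | s * p.1 + ρ * p.2 ≤ q} :=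
    measurableSet_le (by fun_prop) measurable_const
  obtain ⟨hi1, he1⟩ := real_eq_integral hSm
    (F := fun z => if c < |z + γ| then (q - ρ * z) / s else q + ρ * γ / s) (by
      intro z
      ext w
      simp only [Tstat, mem_setOf_eq, mem_Iic, ← hs]
      split_ifs
      · rw [le_div_iff₀ hs0]; constructor <;> intro <;> linarith
      · constructor <;> intro <;> linarith)
  obtain ⟨hi2, he2⟩ := real_eq_integral hUm (F := fun z => (q - ρ * z) / s) (by
      intro z
      ext w
      simp only [mem_setOf_eq, mem_Iic]
      rw [le_div_iff₀ hs0]; constructor <;> intro <;> linarith)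
  rw [sum_law (by linarith)] at he2
  suffices h : stdCdf q < stdNormal2.real {p | Tstat ρ c γ p ≤ q} by
    rw [measureReal_def] at h
    exact (ENNReal.ofReal_lt_iff_lt_toReal
      (by rw [← gauss_real_eq]; positivity) (measure_ne_top _ _)).2 h
  set m := (q + ρ * γ) / s with hm
  have hm0 : 0 ≤ m := by
    rw [hm, hργ]; have := mul_pos habs hc
    exact div_nonneg (by linarith) hs0.le
  have hmq : stdCdf m ≤ stdCdf (q + ρ * γ / s) := by
    apply stdCdf_strictMono.monotone
    rw [hm, add_div]
    have : q / s ≤ q := by rw [div_le_iff₀ hs0]; nlinarith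
    linarith
  -- the lower bound for the difference
  have hL : 0 < ∫ z, (Icc (-c - γ) (c - γ)).indicator
      (fun z => stdPhi m / s * (ρ * (z + γ))) z ∂(gaussianReal 0 1) := by
    rw [integral_gaussianReal_eq_integral_smul one_ne_zero, ← stdPhi_eq]
    have h1 : (fun z => stdPhi z • (Icc (-c - γ) (c - γ)).indicator
        (fun z => stdPhi m / s * (ρ * (z + γ))) z) = (Icc (-c - γ) (c - γ)).indicator
        (fun z => (fun u => stdPhi m / s * ((ρ * u) * stdPhi (u - γ))) (z + γ)) := by
      funext z
      by_cases hz : z ∈ Icc (-c - γ) (c - γ)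
      · simp only [indicator_of_mem hz, smul_eq_mul, add_sub_cancel_right]; ring
      · simp only [indicator_of_notMem hz, smul_zero]
    rw [h1, integral_indicator measurableSet_Icc, integral_Icc_eq_integral_Ioc,
      ← intervalIntegral.integral_of_le (by linarith),
      intervalIntegral.integral_comp_add_right
        (fun u => stdPhi m / s * ((ρ * u) * stdPhi (u - γ))), sub_add_cancel, sub_add_cancel,
      intervalIntegral.integral_const_mul]
    exact mul_pos (div_pos (stdPhi_pos m) hs0) (tilt_pos hc hργ0)
  have hLi : Integrable ((Icc (-c - γ) (c - γ)).indicator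
      (fun z => stdPhi m / s * (ρ * (z + γ)))) (gaussianReal 0 1) := by
    rw [integrable_indicator_iff measurableSet_Icc]
    exact ContinuousOn.integrableOn_compact isCompact_Icc (by fun_prop)
  have hle := integral_mono hLi (hi1.sub hi2) (by
    intro z
    simp only [Pi.sub_apply]
    by_cases hz : c < |z + γ|
    · have : z ∉ Icc (-c - γ) (c - γ) := by
        intro h
        have : |z + γ| ≤ c := abs_le.2 ⟨by linarith [h.1], by linarith [h.2]⟩
        linarith
      simp [hz, this]
    · have hz' := abs_le.1 (not_lt.1 hz)
      have hmem : z ∈ Icc (-c - γ) (c - γ) := ⟨by linarith [hz'.1], by linarith [hz'.2]⟩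
      simp only [hz, if_false, indicator_of_mem hmem]
      have hx0 : 0 ≤ (q - ρ * z) / s := by
        apply div_nonneg _ hs0.le
        have h1 : ρ * (z + γ) ≤ |ρ| * c := by
          calc ρ * (z + γ) ≤ |ρ * (z + γ)| := le_abs_self _
            _ = |ρ| * |z + γ| := abs_mul _ _
            _ ≤ |ρ| * c := by gcongr; exact not_lt.1 hz
        nlinarith
      have h3 := stdCdf_tangent hm0 hx0
      have h4 : stdPhi m * ((q - ρ * z) / s - m) = -(stdPhi m / s * (ρ * (z + γ))) := by
        rw [hm]; field_simp; ring
      linarith)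
  rw [integral_sub' hi1 hi2, ← he1, ← he2] at hle
  linarith
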